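/- (Alternating-group substitution cipher.) Let M be a finite alphabet with |M| = N ≥ 3, probability distribution P_M, and key space K = Alt(M), the alternating group. Set R₂ = 1 minus the sum of the three smallest symbol probabilities (i.e., if P_M(1) ≥ … ≥ P_M(N), R₂ = 1 − P_M(N) − P_M(N−1) − P_M(N−2) = Σ_{j=1}^{N−3} P_M(j)). Then for every message length L: log(2) · R₂^L ≤ H(K | M^L C^L) ≤ log(N!/2) · |K_max| · R₂^L, where K_max (the set of maximal keys) consists exactly of the 3-cycles. -/

import Mathlib

open scoped Classical

noncomputable section

/-- Probability of a word under the i.i.d. extension of the symbol distribution `P`. -/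
def wordP {M : Type*} (P : M → ℝ) {L : ℕ} (m : Fin L → M) : ℝ := ∏ l, P (m l)

/-- Number of keys in `K` mapping the message `m` (letterwise) to the cryptogram `c`. -/
def keyCount {M : Type*} (K : Subgroup (Equiv.Perm M)) {L : ℕ} (m c : Fin L → M) : ℕ :=
  Nat.card {k : Equiv.Perm M // k ∈ K ∧ ∀ l, k (m l) = c l}

/-- The key appearance equivocation `H(K | M^L C^L)` for the substitution cipher with
key space `K` (keys uniform), symbol distribution `P` and message length `L`. -/
def kae {M : Type*} [Fintype M] (K : Subgroup (Equiv.Perm M)) (P : M → ℝ) (L : ℕ) : ℝ :=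
  ∑ m : Fin L → M, ∑ c : Fin L → M,
    wordP P m * (keyCount K m c : ℝ) / (Nat.card K : ℝ) * Real.log (keyCount K m c)

/-- The fixed set `F(π)` of a permutation. -/
def fixedSet {M : Type*} [Fintype M] [DecidableEq M] (π : Equiv.Perm M) : Finset M :=
  Finset.univ.filter fun j => π j = j

/-- `P_π`: total probability of the fixed set of `π`. -/
def Pfix {M : Type*} [Fintype M] [DecidableEq M] (P : M → ℝ) (π : Equiv.Perm M) : ℝ :=
  ∑ j ∈ fixedSet π, P j

/-- A key is maximal if it is a non-identity element of `K` whose fixed set is maximal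
under inclusion among fixed sets of non-identity elements of `K`. -/
def IsMaximalKey {M : Type*} [Fintype M] [DecidableEq M] (K : Subgroup (Equiv.Perm M))
    (π : Equiv.Perm M) : Prop :=
  π ∈ K ∧ π ≠ 1 ∧ ∀ τ ∈ K, τ ≠ 1 → fixedSet π ⊆ fixedSet τ → fixedSet τ = fixedSet π

/-- The stabilizer of the message `m` in `K` is nontrivial. -/
def hasNontrivialStab {M : Type*} (K : Subgroup (Equiv.Perm M)) {L : ℕ} (m : Fin L → M) : Prop :=
  ∃ k ∈ K, k ≠ 1 ∧ ∀ l, k (m l) = m l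

/-- Total probability of length-`L` messages with a nontrivial stabilizer in `K`. -/
def probNontrivial {M : Type*} [Fintype M] (K : Subgroup (Equiv.Perm M)) (P : M → ℝ)
    (L : ℕ) : ℝ :=
  ∑ m : Fin L → M, if hasNontrivialStab K m then wordP P m else 0

/-!
The keys carrying `m` to `c` form a coset of the stabilizer of `m` in `K` or do not exist, so the
key appearance equivocation is the expected logarithm of the size of that stabilizer. This logarithm
lies between `log 2` and `log |K|` if the stabilizer is nontrivial and vanishes otherwise. The
stabilizer of `m` is nontrivial exactly if all letters of `m` lie in the fixed set of some maximal
key, and for a given key `π` this has probability `Pfix P π ^ L`. In the alternating group a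
non-identity key moves at least three letters, so the maximal keys are the 3-cycles, and the most
probable of their fixed sets is the complement of the three least probable letters.
-/

theorem sum_biUnion_le_sum_sum {ι α R : Type*} [DecidableEq α] [AddCommMonoid R] [Preorder R]
    [IsOrderedAddMonoid R] {f : α → R} (hf : ∀ a, 0 ≤ f a) (s : Finset ι) (t : ι → Finset α) :
    ∑ a ∈ s.biUnion t, f a ≤ ∑ i ∈ s, ∑ a ∈ t i, f a := by
  have sum_union_le (u v : Finset α) : ∑ a ∈ u ∪ v, f a ≤ ∑ a ∈ u, f a + ∑ a ∈ v, f a := by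
    rw [← Finset.sum_union_inter]
    exact le_add_of_nonneg_right (Finset.sum_nonneg fun a _ => hf a)
  rw [← Finset.sup_eq_biUnion]
  exact s.apply_sup_le_sum (f := fun u => ∑ a ∈ u, f a) Finset.sum_empty (sum_union_le _ _)

theorem wordP_nonneg {M : Type*} {P : M → ℝ} (hP : ∀ x, 0 ≤ P x) {L : ℕ} (m : Fin L → M) :
    0 ≤ wordP P m :=
  Finset.prod_nonneg fun _ _ => hP _

section KeyCount

variable {M : Type*} (K : Subgroup (Equiv.Perm M)) {L : ℕ}

theorem keyCount_eq_keyCount_self {m c : Fin L → M} (h : keyCount K m c ≠ 0) :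
    keyCount K m c = keyCount K m m := by
  obtain ⟨⟨k₀, hk₀, hk₀mc⟩⟩ := (Nat.card_ne_zero.mp h).1
  refine Nat.card_congr ((Equiv.mulLeft k₀⁻¹).subtypeEquiv fun k => ?_)
  simp only [Equiv.coe_mulLeft, K.mul_mem_cancel_left (K.inv_mem hk₀), Equiv.Perm.mul_apply,
    Equiv.Perm.inv_eq_iff_eq, hk₀mc]

theorem sum_keyCount [Fintype M] (m : Fin L → M) :
    ∑ c : Fin L → M, keyCount K m c = Nat.card K := by
  unfold keyCount
  rw [← Nat.card_sigma]
  refine Nat.card_congr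
    { toFun := fun x => ⟨x.2.1, x.2.2.1⟩
      invFun := fun k => ⟨fun l => k.1 (m l), k.1, k.2, fun _ => rfl⟩
      left_inv := ?_
      right_inv := fun _ => rfl }
  rintro ⟨c, k, hk, hkmc⟩
  obtain rfl : (fun l => k (m l)) = c := funext hkmc
  rfl

theorem one_lt_keyCount_self_iff [Finite M] (m : Fin L → M) :
    1 < keyCount K m m ↔ hasNontrivialStab K m := by
  let one : {k : Equiv.Perm M // k ∈ K ∧ ∀ l, k (m l) = m l} := ⟨1, K.one_mem, fun _ => rfl⟩
  rw [keyCount, Finite.one_lt_card_iff_nontrivial, Subtype.nontrivial_iff_exists_ne _ one]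
  exact exists_congr fun k => by tauto

theorem keyCount_self_pos [Finite M] (m : Fin L → M) : 0 < keyCount K m m :=
  Nat.card_pos_iff.mpr ⟨⟨1, K.one_mem, fun _ => rfl⟩, inferInstance⟩

theorem keyCount_le_card [Finite M] (m c : Fin L → M) : keyCount K m c ≤ Nat.card K :=
  Nat.card_le_card_of_injective _ (Subtype.impEmbedding _ (· ∈ K) fun _ h => h.1).injective

end KeyCount

section Equivocation

variable {M : Type*} [Fintype M] (K : Subgroup (Equiv.Perm M)) {P : M → ℝ}

theorem kae_eq_sum_wordP_mul_log (P : M → ℝ) (L : ℕ) :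
    kae K P L = ∑ m : Fin L → M, wordP P m * Real.log (keyCount K m m) := by
  refine Finset.sum_congr rfl fun m _ => ?_
  have hK : (Nat.card K : ℝ) ≠ 0 := Nat.cast_ne_zero.mpr Nat.card_pos.ne'
  have log_keyCount (c : Fin L → M) :
      keyCount K m c * Real.log (keyCount K m c) = keyCount K m c * Real.log (keyCount K m m) := by
    by_cases h : keyCount K m c = 0
    · simp [h]
    · rw [keyCount_eq_keyCount_self K h]
  calc ∑ c, wordP P m * keyCount K m c / Nat.card K * Real.log (keyCount K m c)
      = ∑ c, wordP P m / Nat.card K * Real.log (keyCount K m m) * keyCount K m c :=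
        Finset.sum_congr rfl fun c _ => by
          linear_combination wordP P m / Nat.card K * log_keyCount c
    _ = wordP P m / Nat.card K * Real.log (keyCount K m m) * Nat.card K := by
        rw [← Finset.mul_sum, ← Nat.cast_sum, sum_keyCount]
    _ = wordP P m * Real.log (keyCount K m m) := by field_simp

theorem log_two_mul_probNontrivial_le_kae (hP : ∀ x, 0 ≤ P x) (L : ℕ) :
    Real.log 2 * probNontrivial K P L ≤ kae K P L := by
  rw [kae_eq_sum_wordP_mul_log, probNontrivial, Finset.mul_sum]
  refine Finset.sum_le_sum fun m _ => ?_
  split_ifs with hm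
  · have two_le : (2 : ℝ) ≤ keyCount K m m := mod_cast (one_lt_keyCount_self_iff K m).mpr hm
    rw [mul_comm]
    gcongr
    exact wordP_nonneg hP m
  · rw [mul_zero]
    exact mul_nonneg (wordP_nonneg hP m) (Real.log_natCast_nonneg _)

theorem kae_le_log_card_mul_probNontrivial (hP : ∀ x, 0 ≤ P x) (L : ℕ) :
    kae K P L ≤ Real.log (Nat.card K) * probNontrivial K P L := by
  rw [kae_eq_sum_wordP_mul_log, probNontrivial, Finset.mul_sum]
  refine Finset.sum_le_sum fun m _ => ?_
  have keyCount_pos := keyCount_self_pos K m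
  split_ifs with hm
  · rw [mul_comm]
    gcongr
    · exact wordP_nonneg hP m
    · exact keyCount_le_card K m m
  · have keyCount_eq_one : keyCount K m m = 1 := by
      rw [← one_lt_keyCount_self_iff] at hm
      lia
    simp [keyCount_eq_one]

end Equivocation

section FixedSet

variable {M : Type*} [Fintype M] [DecidableEq M] {K : Subgroup (Equiv.Perm M)} {P : M → ℝ}

theorem mem_fixedSet {π : Equiv.Perm M} {j : M} : j ∈ fixedSet π ↔ π j = j := by
  simp [fixedSet]

theorem fixedSet_eq_compl_support (π : Equiv.Perm M) : fixedSet π = π.supportᶜ := by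
  ext j
  simp [mem_fixedSet]

theorem Pfix_pow_eq_sum_wordP (P : M → ℝ) (π : Equiv.Perm M) (L : ℕ) :
    Pfix P π ^ L = ∑ m ∈ Fintype.piFinset fun _ : Fin L => fixedSet π, wordP P m :=
  Finset.sum_pow' _ _ _

theorem Pfix_nonneg (hP : ∀ x, 0 ≤ P x) (π : Equiv.Perm M) : 0 ≤ Pfix P π :=
  Finset.sum_nonneg fun _ _ => hP _

theorem exists_isMaximalKey_fixedSet_subset {k : Equiv.Perm M} (hk : k ∈ K) (hk1 : k ≠ 1) :
    ∃ π, IsMaximalKey K π ∧ fixedSet k ⊆ fixedSet π := by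
  obtain ⟨_, hsub, ⟨π, ⟨hπ, hπ1⟩, rfl⟩, hmax⟩ :=
    (Set.toFinite (fixedSet '' {τ | τ ∈ K ∧ τ ≠ 1})).exists_le_maximal ⟨k, ⟨hk, hk1⟩, rfl⟩
  exact ⟨π, ⟨hπ, hπ1, fun τ hτ hτ1 h => (hmax ⟨τ, ⟨hτ, hτ1⟩, rfl⟩ h).antisymm h⟩, hsub⟩

theorem Pfix_pow_le_probNontrivial (hP : ∀ x, 0 ≤ P x) {π : Equiv.Perm M} (hπ : π ∈ K)
    (hπ1 : π ≠ 1) (L : ℕ) : Pfix P π ^ L ≤ probNontrivial K P L := by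
  rw [Pfix_pow_eq_sum_wordP, probNontrivial, ← Finset.sum_filter]
  refine Finset.sum_le_sum_of_subset_of_nonneg (fun m hm => ?_) fun m _ _ => wordP_nonneg hP m
  simp only [Fintype.mem_piFinset, mem_fixedSet] at hm
  exact Finset.mem_filter.mpr ⟨Finset.mem_univ m, π, hπ, hπ1, hm⟩

theorem probNontrivial_le_sum_Pfix_pow (hP : ∀ x, 0 ≤ P x) (L : ℕ) :
    probNontrivial K P L ≤ ∑ π with IsMaximalKey K π, Pfix P π ^ L := by
  have words_subset : ({m | hasNontrivialStab K m} : Finset (Fin L → M)) ⊆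
      ({π | IsMaximalKey K π} : Finset (Equiv.Perm M)).biUnion
        fun π => Fintype.piFinset fun _ => fixedSet π := by
    intro m hm
    obtain ⟨k, hk, hk1, hkm⟩ := (Finset.mem_filter.mp hm).2
    obtain ⟨π, hπ, hsub⟩ := exists_isMaximalKey_fixedSet_subset hk hk1
    exact Finset.mem_biUnion.mpr ⟨π, Finset.mem_filter.mpr ⟨Finset.mem_univ π, hπ⟩,
      Fintype.mem_piFinset.mpr fun l => hsub (mem_fixedSet.mpr (hkm l))⟩
  simp only [probNontrivial, ← Finset.sum_filter, Pfix_pow_eq_sum_wordP]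
  exact (Finset.sum_le_sum_of_subset_of_nonneg words_subset fun m _ _ => wordP_nonneg hP m).trans
    (sum_biUnion_le_sum_sum (wordP_nonneg hP) _ _)

theorem log_two_mul_Pfix_pow_le_kae (hP : ∀ x, 0 ≤ P x) {π : Equiv.Perm M} (hπ : π ∈ K)
    (hπ1 : π ≠ 1) (L : ℕ) : Real.log 2 * Pfix P π ^ L ≤ kae K P L :=
  (mul_le_mul_of_nonneg_left (Pfix_pow_le_probNontrivial hP hπ hπ1 L)
    (Real.log_nonneg one_le_two)).trans (log_two_mul_probNontrivial_le_kae K hP L)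

theorem kae_le_log_card_mul_card_isMaximalKey_mul_pow (hP : ∀ x, 0 ≤ P x) {R : ℝ}
    (hR : ∀ π, IsMaximalKey K π → Pfix P π ≤ R) (L : ℕ) :
    kae K P L ≤ Real.log (Nat.card K) * Nat.card {π // IsMaximalKey K π} * R ^ L := by
  have sum_le : ∑ π with IsMaximalKey K π, Pfix P π ^ L ≤
      Nat.card {π // IsMaximalKey K π} * R ^ L := by
    rw [Nat.card_eq_fintype_card, Fintype.card_subtype, ← nsmul_eq_mul]
    refine Finset.sum_le_card_nsmul _ _ _ fun π hπ => ?_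
    exact pow_le_pow_left₀ (Pfix_nonneg hP π) (hR π (Finset.mem_filter.mp hπ).2) L
  rw [mul_assoc]
  exact (kae_le_log_card_mul_probNontrivial K hP L).trans <| mul_le_mul_of_nonneg_left
    ((probNontrivial_le_sum_Pfix_pow hP L).trans sum_le) (Real.log_natCast_nonneg _)

end FixedSet

section AlternatingGroup

variable {M : Type*} [Fintype M] [DecidableEq M]

theorem two_lt_card_support_of_mem_alternatingGroup {π : Equiv.Perm M}
    (hπ : π ∈ alternatingGroup M) (hπ1 : π ≠ 1) : 2 < π.support.card := by
  refine (Equiv.Perm.two_le_card_support_of_ne_one hπ1).lt_of_ne' fun hcard => ?_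
  have sign_eq := (Equiv.Perm.card_support_eq_two.mp hcard).sign_eq
  rw [Equiv.Perm.mem_alternatingGroup.mp hπ] at sign_eq
  exact absurd sign_eq (by decide)

theorem exists_isThreeCycle_support_eq {s : Finset M} (hs : s.card = 3) :
    ∃ τ : Equiv.Perm M, τ.IsThreeCycle ∧ τ.support = s := by
  obtain ⟨x, y, z, hxy, hxz, hyz, rfl⟩ := Finset.card_eq_three.mp hs
  have hsupp := Equiv.Perm.support_swap_mul_swap (x := x) (y := y) (z := z)
    (by simp [hxy, hxz, hyz])
  exact ⟨_, card_support_eq_three_iff.mp (hsupp ▸ hs), hsupp⟩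

theorem isMaximalKey_alternatingGroup_iff {π : Equiv.Perm M} :
    IsMaximalKey (alternatingGroup M) π ↔ π.IsThreeCycle := by
  simp only [IsMaximalKey, fixedSet_eq_compl_support, Finset.compl_subset_compl, compl_inj_iff]
  constructor
  · rintro ⟨hπ, hπ1, hmax⟩
    obtain ⟨s, hsub, hs⟩ :=
      Finset.exists_subset_card_eq (two_lt_card_support_of_mem_alternatingGroup hπ hπ1)
    obtain ⟨τ, hτ, rfl⟩ := exists_isThreeCycle_support_eq hs
    rwa [← card_support_eq_three_iff, ← hmax τ hτ.mem_alternatingGroup hτ.ne_one hsub]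
  · refine fun hπ => ⟨hπ.mem_alternatingGroup, hπ.ne_one, fun τ hτ hτ1 hsub => ?_⟩
    refine Finset.eq_of_subset_of_card_le hsub ?_
    rw [hπ.card_support]
    exact two_lt_card_support_of_mem_alternatingGroup hτ hτ1

theorem natCast_card_alternatingGroup [Nontrivial M] :
    (Nat.card (alternatingGroup M) : ℝ) = (Nat.factorial (Fintype.card M) : ℝ) / 2 := by
  rw [eq_div_iff two_ne_zero, mul_comm, ← Fintype.card_perm, ← two_mul_card_alternatingGroup]
  simp

theorem Pfix_eq_one_sub_sum_support {P : M → ℝ} (hsum : ∑ x, P x = 1) (π : Equiv.Perm M) :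
    Pfix P π = 1 - ∑ j ∈ π.support, P j := by
  rw [Pfix, fixedSet_eq_compl_support, ← hsum, ← Finset.sum_compl_add_sum π.support,
    add_sub_cancel_right]

theorem exists_sum_three_eq_iff_exists_isThreeCycle {P : M → ℝ} (hsum : ∑ x, P x = 1) {y : ℝ} :
    (∃ i j k : M, i ≠ j ∧ i ≠ k ∧ j ≠ k ∧ P i + P j + P k = y) ↔
      ∃ π : Equiv.Perm M, π.IsThreeCycle ∧ Pfix P π = 1 - y := by
  have sum_three {i j k : M} (hij : i ≠ j) (hik : i ≠ k) (hjk : j ≠ k) :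
      ∑ x ∈ ({i, j, k} : Finset M), P x = P i + P j + P k := by
    rw [Finset.sum_insert (by simp [hij, hik]), Finset.sum_pair hjk, add_assoc]
  simp only [Pfix_eq_one_sub_sum_support hsum, sub_right_inj]
  constructor
  · rintro ⟨i, j, k, hij, hik, hjk, rfl⟩
    obtain ⟨π, hπ, hsupp⟩ :=
      exists_isThreeCycle_support_eq (Finset.card_eq_three.mpr ⟨i, j, k, hij, hik, hjk, rfl⟩)
    exact ⟨π, hπ, by rw [hsupp, sum_three hij hik hjk]⟩
  · rintro ⟨π, hπ, rfl⟩
    obtain ⟨i, j, k, hij, hik, hjk, hsupp⟩ := Finset.card_eq_three.mp hπ.card_support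
    exact ⟨i, j, k, hij, hik, hjk, by rw [hsupp, sum_three hij hik hjk]⟩

theorem isGreatest_Pfix_image_isThreeCycle {P : M → ℝ} (hsum : ∑ x, P x = 1) {c : ℝ}
    (hc : IsLeast {y : ℝ | ∃ i j k : M, i ≠ j ∧ i ≠ k ∧ j ≠ k ∧ P i + P j + P k = y} c) :
    IsGreatest (Pfix P '' {π | π.IsThreeCycle}) (1 - c) := by
  simp only [exists_sum_three_eq_iff_exists_isThreeCycle hsum] at hc
  refine ⟨hc.1, ?_⟩
  rintro _ ⟨π, hπ, rfl⟩
  have c_le : c ≤ 1 - Pfix P π := hc.2 ⟨π, hπ, (sub_sub_cancel 1 _).symm⟩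
  linarith

end AlternatingGroup

/-- Alternating-group substitution cipher:
`log 2 · R₂^L ≤ H(K | M^L C^L) ≤ log(N!/2) · |K_max| · R₂^L` with
`R₂ = 1` minus the sum of the three smallest symbol probabilities, and `K_max` consisting
exactly of the 3-cycles. -/
theorem kae_bounds_alternating_substitution {M : Type*} [Fintype M] [DecidableEq M]
    (hN : 3 ≤ Fintype.card M) (P : M → ℝ)
    (hP : ∀ x, 0 ≤ P x) (hsum : ∑ x, P x = 1)
    (c : ℝ)
    (hc : IsLeast {y : ℝ | ∃ i j k : M, i ≠ j ∧ i ≠ k ∧ j ≠ k ∧ P i + P j + P k = y} c)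
    (L : ℕ) :
    (∀ π : Equiv.Perm M, IsMaximalKey (alternatingGroup M) π ↔ π.IsThreeCycle) ∧
    Real.log 2 * (1 - c) ^ L ≤ kae (alternatingGroup M) P L ∧
    kae (alternatingGroup M) P L ≤
      Real.log ((Nat.factorial (Fintype.card M) : ℝ) / 2) *
        (Nat.card {π : Equiv.Perm M // IsMaximalKey (alternatingGroup M) π}) *
        (1 - c) ^ L := by
  obtain ⟨⟨τ, hτ, hτc⟩, hle⟩ := isGreatest_Pfix_image_isThreeCycle hsum hc
  refine ⟨fun π => isMaximalKey_alternatingGroup_iff, ?_, ?_⟩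
  · rw [← hτc]
    exact log_two_mul_Pfix_pow_le_kae hP hτ.mem_alternatingGroup hτ.ne_one L
  · have : Nontrivial M := Fintype.one_lt_card_iff_nontrivial.mp (by lia)
    rw [← natCast_card_alternatingGroup]
    refine kae_le_log_card_mul_card_isMaximalKey_mul_pow hP (fun π hπ => ?_) L
    exact hle ⟨π, isMaximalKey_alternatingGroup_iff.mp hπ, rfl⟩
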